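/- Let q* ∈ D satisfy Δ(q*) = 0, ∇Δ(q*) ≠ 0, a(q*) ≠ 0, and (a·Δ_t − b·Δ_x)(q*) ≠ 0, and set p₀ = −b(q*)/a(q*) (the isotropic direction at the parabolic point q*). Then V(q*, p₀) = 0, and the germ of V at the singular point (q*, p₀) is C^∞-smoothly orbitally equivalent to the germ at 0 of the vector field ξ̇ = 2ξ, η̇ = η, ζ̇ = 0. -/

import Mathlib

open Filter Topology

/-- Partial derivative of `g : ℝ² → ℝ` with respect to the first coordinate. -/
noncomputable def d1 (g : ℝ × ℝ → ℝ) (q : ℝ × ℝ) : ℝ := fderiv ℝ g q ((1 : ℝ), (0 : ℝ))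

/-- Partial derivative of `g : ℝ² → ℝ` with respect to the second coordinate. -/
noncomputable def d2 (g : ℝ × ℝ → ℝ) (q : ℝ × ℝ) : ℝ := fderiv ℝ g q ((0 : ℝ), (1 : ℝ))

/-- Two vector fields `V`, `N` with marked points `x₀`, `y₀` are `C^∞`-smoothly orbitally
equivalent (as germs) if there are open neighborhoods `U ∋ x₀`, `U' ∋ y₀` with `U`
contained in the domain `Dom`, a `C^∞` diffeomorphism `Φ : U → U'` with `Φ x₀ = y₀`, and
a `C^∞` nowhere-vanishing function `h : U → ℝ` with `DΦ(x)·V(x) = h(x)·N(Φ(x))` on `U`. -/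
def OrbEquiv {E : Type*} [NormedAddCommGroup E] [NormedSpace ℝ E]
    (Dom : Set E) (V N : E → E) (x₀ y₀ : E) : Prop :=
  ∃ (U U' : Set E) (Φ Ψ : E → E) (h : E → ℝ),
    IsOpen U ∧ IsOpen U' ∧ x₀ ∈ U ∧ y₀ ∈ U' ∧ U ⊆ Dom ∧
    ContDiffOn ℝ (⊤ : ℕ∞) Φ U ∧ ContDiffOn ℝ (⊤ : ℕ∞) Ψ U' ∧
    Φ x₀ = y₀ ∧ Set.MapsTo Φ U U' ∧ Set.MapsTo Ψ U' U ∧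
    (∀ x ∈ U, Ψ (Φ x) = x) ∧ (∀ y ∈ U', Φ (Ψ y) = y) ∧
    ContDiffOn ℝ (⊤ : ℕ∞) h U ∧ (∀ x ∈ U, h x ≠ 0) ∧
    ∀ x ∈ U, fderiv ℝ Φ x (V x) = h x • N (Φ x)

open scoped ContDiff

/-- Inverse function theorem for a map smooth on an open set, with smoothness of the inverse on the
whole target. -/
theorem exists_openPartialHomeomorph_contDiffOn_symm {E F : Type*}
    [NormedAddCommGroup E] [NormedSpace ℝ E] [CompleteSpace E]
    [NormedAddCommGroup F] [NormedSpace ℝ F] {f : E → F} {s : Set E} (hs : IsOpen s)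
    (hf : ContDiffOn ℝ ∞ f s) {x : E} (hx : x ∈ s) (f' : E ≃L[ℝ] F)
    (hf' : HasFDerivAt f (f' : E →L[ℝ] F) x) :
    ∃ e : OpenPartialHomeomorph E F, ⇑e = f ∧ x ∈ e.source ∧ e.source ⊆ s ∧
      ContDiffOn ℝ ∞ e.symm e.target := by
  have hopen : IsOpen (s ∩ fderiv ℝ f ⁻¹' Set.range ContinuousLinearEquiv.toContinuousLinearMap) :=
    (hf.continuousOn_fderiv_of_isOpen hs (by simp)).isOpen_inter_preimage hs
      ContinuousLinearEquiv.isOpen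
  have hfx : ContDiffAt ℝ ∞ f x := hf.contDiffAt (hs.mem_nhds hx)
  refine ⟨(hfx.toOpenPartialHomeomorph f hf' (by simp)).restrOpen _ hopen, rfl,
    ⟨hfx.mem_toOpenPartialHomeomorph_source hf' (by simp), hx, f', hf'.fderiv.symm⟩,
    fun y hy => hy.2.1, ?_⟩
  intro y hy
  set e := (hfx.toOpenPartialHomeomorph f hf' (by simp)).restrOpen _ hopen with he
  obtain ⟨-, hys, g, hg⟩ := e.map_target hy
  have hfy : ContDiffAt ℝ ∞ f (e.symm y) := hf.contDiffAt (hs.mem_nhds hys)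
  refine (e.contDiffAt_symm (f₀' := g) hy ?_ hfy).contDiffWithinAt
  rw [hg]
  exact (hfy.differentiableAt (by simp)).hasFDerivAt

section Nemytskii

universe u

variable {K : Type*} [TopologicalSpace K] [CompactSpace K]

/-- Pointwise application of a continuous family of continuous linear maps to a continuous
function. -/
noncomputable def pointwiseApply (K : Type*) [TopologicalSpace K] [CompactSpace K]
    (E F : Type*) [NormedAddCommGroup E] [NormedSpace ℝ E]
    [NormedAddCommGroup F] [NormedSpace ℝ F] :
    C(K, E →L[ℝ] F) →L[ℝ] C(K, E) →L[ℝ] C(K, F) :=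
  LinearMap.mkContinuous₂
    (LinearMap.mk₂ ℝ (fun (A : C(K, E →L[ℝ] F)) (u : C(K, E)) =>
        (⟨fun k => A k (u k), by fun_prop⟩ : C(K, F)))
      (fun _ _ _ => by ext; simp) (fun _ _ _ => by ext; simp)
      (fun _ _ _ => by ext; simp) (fun _ _ _ => by ext; simp)) 1
    (fun A u => by
      rw [one_mul]
      refine (ContinuousMap.norm_le _ (by positivity)).2 fun k => ?_
      exact ((A k).le_opNorm _).trans (mul_le_mul (A.norm_coe_le_norm k) (u.norm_coe_le_norm k)
        (norm_nonneg (u k)) (norm_nonneg A)))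

@[simp]
theorem pointwiseApply_apply {E F : Type*} [NormedAddCommGroup E] [NormedSpace ℝ E]
    [NormedAddCommGroup F] [NormedSpace ℝ F] (A : C(K, E →L[ℝ] F)) (u : C(K, E)) (k : K) :
    pointwiseApply K E F A u k = A k (u k) := rfl

/-- The superposition operator `u ↦ f ∘ u` of a `C¹` map is differentiable. -/
theorem ContinuousMap.hasFDerivAt_comp_left {E F : Type*}
    [NormedAddCommGroup E] [NormedSpace ℝ E] [NormedAddCommGroup F] [NormedSpace ℝ F]
    (f : C(E, F)) (f' : C(E, E →L[ℝ] F)) (hf : ∀ x, HasFDerivAt f (f' x) x) (u : C(K, E)) :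
    HasFDerivAt (fun v : C(K, E) => f.comp v) (pointwiseApply K E F (f'.comp u)) u := by
  refine HasFDerivAt.of_isLittleO (Asymptotics.isLittleO_iff.2 fun ε hε => ?_)
  have hunif := (isCompact_range u.continuous).uniformContinuousAt_of_continuousAt f'
    (fun x _ => f'.continuous.continuousAt) (Metric.dist_mem_uniformity hε)
  obtain ⟨δ, hδ, hδ'⟩ := Metric.mem_uniformity_dist.1 hunif
  filter_upwards [Metric.ball_mem_nhds u hδ] with v hv
  refine (ContinuousMap.norm_le _ (by positivity)).2 fun k => ?_
  have hvk : v k ∈ Metric.ball (u k) δ := (ContinuousMap.dist_apply_le_dist k).trans_lt hv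
  have key := (convex_ball (u k) δ).norm_image_sub_le_of_norm_hasFDerivWithin_le' (f := f)
    (f' := f') (φ := f' (u k)) (C := ε) (fun x _ => (hf x).hasFDerivWithinAt)
    (fun x hx => by
      have hxd : dist (u k) x < δ := by rw [dist_comm]; exact hx
      have := hδ' hxd ⟨k, rfl⟩
      rw [← dist_eq_norm, dist_comm]
      exact le_of_lt this)
    (Metric.mem_ball_self hδ) hvk
  refine key.trans (mul_le_mul_of_nonneg_left ?_ hε.le)
  exact (v - u).norm_coe_le_norm k

theorem ContinuousMap.contDiff_nat_comp_left {E : Type u} [NormedAddCommGroup E] [NormedSpace ℝ E]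
    (n : ℕ) : ∀ {F : Type u} [NormedAddCommGroup F] [NormedSpace ℝ F] (f : C(E, F)),
      ContDiff ℝ ∞ f → ContDiff ℝ n (fun v : C(K, E) => f.comp v) := by
  induction n with
  | zero =>
    intro F _ _ f _
    exact contDiff_zero.2 (ContinuousMap.continuous_postcomp f)
  | succ n ih =>
    intro F _ _ f hf
    have hf' : ContDiff ℝ ∞ (fderiv ℝ f) := hf.fderiv_right (by simp)
    have hB : ContDiff ℝ n (fun A => pointwiseApply K E F A) := ContinuousLinearMap.contDiff _
    refine contDiff_succ_iff_hasFDerivAt.2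
      ⟨fun u => pointwiseApply K E F ((⟨fderiv ℝ f, hf'.continuous⟩ : C(E, E →L[ℝ] F)).comp u),
        hB.comp (ih ⟨fderiv ℝ f, hf'.continuous⟩ hf'), fun u => ?_⟩
    exact f.hasFDerivAt_comp_left _ (fun x => (hf.differentiable (by simp) x).hasFDerivAt) u

/-- The superposition operator `u ↦ f ∘ u` of a smooth map is smooth. -/
theorem ContinuousMap.contDiff_comp_left {E F : Type u} [NormedAddCommGroup E] [NormedSpace ℝ E]
    [NormedAddCommGroup F] [NormedSpace ℝ F] (f : C(E, F)) (hf : ContDiff ℝ ∞ f) :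
    ContDiff ℝ ∞ (fun v : C(K, E) => f.comp v) :=
  contDiff_infty.2 fun n => ContinuousMap.contDiff_nat_comp_left n f hf

end Nemytskii

section IntegralEquation

variable {P F : Type} [NormedAddCommGroup P] [NormedSpace ℝ P] [NormedAddCommGroup F]
  [NormedSpace ℝ F]

/-- The projection of the real line onto the unit interval. -/
noncomputable def projUnit (s : ℝ) : unitInterval := Set.projIcc 0 1 zero_le_one s

@[fun_prop]
theorem continuous_projUnit : Continuous projUnit :=
  continuous_projIcc (h := zero_le_one)

theorem coe_projUnit_of_mem {s : ℝ} (hs : s ∈ Set.Icc (0 : ℝ) 1) : (projUnit s : ℝ) = s := by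
  rw [projUnit, Set.projIcc_of_mem zero_le_one hs]

/-- Integration from the left endpoint, as an operator on continuous functions on the unit
interval. -/
noncomputable def volterra (F : Type) [NormedAddCommGroup F] [NormedSpace ℝ F] :
    C(unitInterval, F) →L[ℝ] C(unitInterval, F) :=
  LinearMap.mkContinuous
    { toFun := fun u => ⟨fun τ => ∫ s in (0 : ℝ)..τ, u (projUnit s),
        (intervalIntegral.continuous_primitive
          (fun _ _ => (by fun_prop : Continuous fun s => u (projUnit s)).intervalIntegrable _ _)
          0).comp continuous_subtype_val⟩
      map_add' := fun u v => by
        ext τ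
        exact intervalIntegral.integral_add
          ((by fun_prop : Continuous fun s => u (projUnit s)).intervalIntegrable _ _)
          ((by fun_prop : Continuous fun s => v (projUnit s)).intervalIntegrable _ _)
      map_smul' := fun c u => by
        ext τ
        exact intervalIntegral.integral_smul c _ } 1
    (fun u => by
      rw [one_mul]
      refine (ContinuousMap.norm_le _ (norm_nonneg _)).2 fun τ => ?_
      refine (intervalIntegral.norm_integral_le_of_norm_le_const
        (fun s _ => u.norm_coe_le_norm (projUnit s))).trans ?_
      have hτ : |(τ : ℝ) - 0| ≤ 1 := by
        rw [sub_zero, abs_of_nonneg τ.2.1]; exact τ.2.2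
      exact mul_le_of_le_one_right (norm_nonneg _) hτ)

theorem volterra_apply (u : C(unitInterval, F)) (τ : unitInterval) :
    volterra F u τ = ∫ s in (0 : ℝ)..τ, u (projUnit s) := rfl

/-- Constant functions on the unit interval, as a continuous linear map. -/
noncomputable def constUnit (F : Type) [NormedAddCommGroup F] [NormedSpace ℝ F] :
    F →L[ℝ] C(unitInterval, F) :=
  LinearMap.mkContinuous
    { toFun := fun x => ContinuousMap.const _ x
      map_add' := fun _ _ => rfl
      map_smul' := fun _ _ => rfl } 1
    (fun x => by
      rw [one_mul]
      exact (ContinuousMap.norm_le _ (norm_nonneg _)).2 fun τ => le_rfl)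

@[simp]
theorem constUnit_apply (x : F) (τ : unitInterval) : constUnit F x τ = x := rfl

/-- The linear part of the map sending a parameter and a curve to the extended curve
`τ ↦ (p, τ, v τ)`. -/
noncomputable def extendCurve (P F : Type) [NormedAddCommGroup P] [NormedSpace ℝ P]
    [NormedAddCommGroup F] [NormedSpace ℝ F] :
    P × C(unitInterval, F) →L[ℝ] C(unitInterval, P × ℝ × F) :=
  LinearMap.mkContinuous
    { toFun := fun w => ⟨fun τ => (w.1, 0, w.2 τ), by fun_prop⟩
      map_add' := fun _ _ => by ext <;> simp
      map_smul' := fun _ _ => by ext <;> simp } 1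
    (fun w => by
      rw [one_mul]
      refine (ContinuousMap.norm_le _ (norm_nonneg _)).2 fun τ => ?_
      refine max_le (norm_fst_le w) (max_le ?_ ?_)
      · simp
      · exact (w.2.norm_coe_le_norm τ).trans (norm_snd_le w))

@[simp]
theorem extendCurve_apply (w : P × C(unitInterval, F)) (τ : unitInterval) :
    extendCurve P F w τ = (w.1, 0, w.2 τ) := rfl

/-- The curve `τ ↦ (0, τ, 0)`. -/
def timeCurve (P F : Type) [NormedAddCommGroup P] [NormedAddCommGroup F] :
    C(unitInterval, P × ℝ × F) := ⟨fun τ => (0, (τ : ℝ), 0), by fun_prop⟩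

@[simp]
theorem timeCurve_apply {P F : Type} [NormedAddCommGroup P] [NormedAddCommGroup F]
    (τ : unitInterval) : timeCurve P F τ = (0, (τ : ℝ), 0) := rfl

/-- The defect of a curve `v` as a solution of `v' = f (p, τ, v)`, `v 0 = x`. -/
noncomputable def odeDefect (f : C(P × ℝ × F, F)) (w : (P × F) × C(unitInterval, F)) :
    C(unitInterval, F) :=
  w.2 - constUnit F w.1.2 - volterra F (f.comp (timeCurve P F + extendCurve P F (w.1.1, w.2)))

theorem odeDefect_eq_zero_iff (f : C(P × ℝ × F, F)) (a : P × F) (v : C(unitInterval, F)) :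
    odeDefect f (a, v) = 0 ↔ ∀ τ : unitInterval,
      v τ = a.2 + ∫ s in (0 : ℝ)..τ, f (a.1, (projUnit s : ℝ), v (projUnit s)) := by
  rw [ContinuousMap.ext_iff]
  refine forall_congr' fun τ => ?_
  simp only [odeDefect, ContinuousMap.sub_apply, constUnit_apply, volterra_apply,
    ContinuousMap.comp_apply, ContinuousMap.add_apply, timeCurve_apply, extendCurve_apply,
    Prod.mk_add_mk, zero_add, add_zero, ContinuousMap.zero_apply]
  rw [sub_sub, sub_eq_zero]

theorem contDiff_odeDefect (f : C(P × ℝ × F, F)) (hf : ContDiff ℝ ∞ f) :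
    ContDiff ℝ ∞ (odeDefect f) := by
  have hcomp : ContDiff ℝ ∞ fun w : (P × F) × C(unitInterval, F) =>
      f.comp (timeCurve P F + extendCurve P F (w.1.1, w.2)) :=
    (ContinuousMap.contDiff_comp_left f hf).comp
      (contDiff_const.add ((extendCurve P F).contDiff.comp
        (contDiff_fst.fst.prodMk contDiff_snd)))
  exact (contDiff_snd.sub ((constUnit F).contDiff.comp contDiff_fst.snd)).sub
    ((volterra F).contDiff.comp hcomp)

theorem fderiv_odeDefect_zero (f : C(P × ℝ × F, F)) (hf : ContDiff ℝ ∞ f)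
    (hfD : ∀ τ : ℝ, ∀ x : F, fderiv ℝ f (0, τ, 0) (0, 0, x) = 0)
    (x : F) (v : C(unitInterval, F)) :
    fderiv ℝ (odeDefect f) 0 ((0, x), v) = v - constUnit F x := by
  have hf' : ContDiff ℝ ∞ (fderiv ℝ f) := hf.fderiv_right (by simp)
  have hlin : HasDerivAt (fun t : ℝ => (t • (((0 : P), x), v) : (P × F) × C(unitInterval, F)))
      (((0 : P), x), v) 0 := by
    simpa using (hasDerivAt_id (0 : ℝ)).smul_const (((0 : P), x), v)
  have hext : HasDerivAt (fun t : ℝ => timeCurve P F + t • extendCurve P F (0, v))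
      (extendCurve P F (0, v)) 0 := by
    simpa using ((hasDerivAt_id (0 : ℝ)).smul_const (extendCurve P F (0, v))).const_add
      (timeCurve P F)
  have hcomp := (f.hasFDerivAt_comp_left ⟨fderiv ℝ f, hf'.continuous⟩
    (fun y => (hf.differentiable (by simp) y).hasFDerivAt)
    (timeCurve P F + (0 : ℝ) • extendCurve P F (0, v))).comp_hasDerivAt (0 : ℝ) hext
  have hG : HasFDerivAt (odeDefect f) (fderiv ℝ (odeDefect f) 0)
      ((0 : ℝ) • (((0 : P), x), v) : (P × F) × C(unitInterval, F)) := by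
    rw [zero_smul]
    exact ((contDiff_odeDefect f hf).differentiable (by simp) 0).hasFDerivAt
  have h1 := hG.comp_hasDerivAt (0 : ℝ) hlin
  have h2 : HasDerivAt (fun t : ℝ => t • v - t • constUnit F x - volterra F
      (f.comp (timeCurve P F + t • extendCurve P F (0, v)))) _ 0 :=
    (((hasDerivAt_id (0 : ℝ)).smul_const v).sub
      ((hasDerivAt_id (0 : ℝ)).smul_const (constUnit F x))).sub
      ((volterra F).hasFDerivAt.comp_hasDerivAt (0 : ℝ) hcomp)
  have h3 : (odeDefect f ∘ fun t : ℝ => (t • (((0 : P), x), v) : (P × F) × C(unitInterval, F)))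
      = fun t : ℝ => t • v - t • constUnit F x - volterra F
      (f.comp (timeCurve P F + t • extendCurve P F (0, v))) := by
    funext t
    simp only [Function.comp, odeDefect, Prod.smul_mk, smul_zero, ← map_smul]
  rw [h3] at h1
  have h4 := h1.unique h2
  have h5 : (pointwiseApply unitInterval (P × ℝ × F) F
      ((⟨fderiv ℝ f, hf'.continuous⟩ : C(P × ℝ × F, P × ℝ × F →L[ℝ] F)).comp
        (timeCurve P F + (0 : ℝ) • extendCurve P F (0, v)))) (extendCurve P F (0, v)) = 0 := by
    ext τ
    simp [hfD]
  rw [h5, map_zero, sub_zero] at h4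
  simpa using h4

/-- Smooth dependence of the solutions of `v' = f (p, τ, v)` on the unit time interval on the
parameter and the initial value, near a trivial solution at which the equation is trivially
linearized. -/
theorem exists_contDiffOn_solution [CompleteSpace P] [CompleteSpace F] (f : C(P × ℝ × F, F))
    (hf : ContDiff ℝ ∞ f) (hf0 : ∀ τ : ℝ, f (0, τ, 0) = 0)
    (hfD : ∀ τ : ℝ, ∀ x : F, fderiv ℝ f (0, τ, 0) (0, 0, x) = 0) :
    ∃ r > 0, ∃ ρ : ℝ, ∃ u : P × F → C(unitInterval, F),
      ContDiffOn ℝ ∞ u (Metric.ball 0 r) ∧ u 0 = 0 ∧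
      (∀ a ∈ Metric.ball (0 : P × F) r, odeDefect f (a, u a) = 0 ∧ ‖u a‖ < ρ) ∧
      (∀ a ∈ Metric.ball (0 : P × F) r, ∀ v, ‖v‖ < ρ → odeDefect f (a, v) = 0 → v = u a) ∧
      ∀ x : F, fderiv ℝ u 0 (0, x) = constUnit F x := by
  have hG := contDiff_odeDefect f hf
  have hG0 : odeDefect f 0 = 0 :=
    (odeDefect_eq_zero_iff f 0 0).2 fun τ => by simp [hf0]
  set D := fderiv ℝ (odeDefect f) 0 with hD
  have hDG : HasFDerivAt (odeDefect f) D 0 := (hG.differentiable (by simp) 0).hasFDerivAt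
  have hT : ContDiff ℝ ∞ fun w : (P × F) × C(unitInterval, F) => (w.1, odeDefect f w) :=
    contDiff_fst.prodMk hG
  let T' : ((P × F) × C(unitInterval, F)) ≃L[ℝ] ((P × F) × C(unitInterval, F)) :=
    (ContinuousLinearEquiv.refl ℝ (P × F)).skewProd (ContinuousLinearEquiv.refl ℝ _)
      (D.comp (ContinuousLinearMap.inl ℝ _ _))
  have hT' : HasFDerivAt (fun w : (P × F) × C(unitInterval, F) => (w.1, odeDefect f w))
      (T' : ((P × F) × C(unitInterval, F)) →L[ℝ] ((P × F) × C(unitInterval, F))) 0 := by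
    refine (hasFDerivAt_fst.prodMk hDG).congr_fderiv ?_
    refine ContinuousLinearMap.ext fun w => Prod.ext rfl ?_
    have hw : w = (w.1, 0) + ((0, 0), w.2) := by ext <;> simp
    have h2 := fderiv_odeDefect_zero f hf hfD 0 w.2
    rw [map_zero, sub_zero, ← hD] at h2
    have h3 : D w = w.2 + D (w.1, 0) := by
      conv_lhs => rw [hw, map_add, h2, add_comm]
    exact h3
  obtain ⟨e, hef, he0, -, hes⟩ :=
    exists_openPartialHomeomorph_contDiffOn_symm isOpen_univ hT.contDiffOn (Set.mem_univ 0) T' hT'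
  have hefw : ∀ w, e w = (w.1, odeDefect f w) := fun w => by rw [hef]
  have he00 : e 0 = 0 := by rw [hefw, hG0]; rfl
  have ht0 : ((0 : P × F), (0 : C(unitInterval, F))) ∈ e.target := by
    have := e.map_source he0; rwa [he00] at this
  obtain ⟨ρ, hρ, hρs⟩ := Metric.isOpen_iff.1 e.open_source 0 he0
  have hs0 : e.symm (0, 0) = 0 := by
    have := e.left_inv he0; rwa [he00] at this
  set u : P × F → C(unitInterval, F) := fun a => (e.symm (a, 0)).2 with hu
  have hcont : ContinuousAt u 0 :=
    (continuous_snd.continuousAt.comp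
      ((e.continuousAt_symm ht0).comp (f := fun a : P × F => (a, (0 : C(unitInterval, F))))
        (by fun_prop)))
  have hu0 : u 0 = 0 := by simp only [hu]; rw [hs0]; rfl
  have hnear : ∀ᶠ a in 𝓝 (0 : P × F), (a, (0 : C(unitInterval, F))) ∈ e.target ∧
      ‖u a‖ < ρ ∧ ‖a‖ < ρ := by
    have h1 : ContinuousAt (fun a : P × F => (a, (0 : C(unitInterval, F)))) 0 := by fun_prop
    refine (h1.eventually (e.open_target.mem_nhds ht0)).and
      ((hcont.norm.eventually_lt continuousAt_const (by simpa [hu0] using hρ)).and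
        (continuous_norm.continuousAt.eventually_lt continuousAt_const (by simpa using hρ)))
  obtain ⟨r, hr, hball⟩ := Metric.eventually_nhds_iff_ball.1 hnear
  have hsol : ∀ a ∈ Metric.ball (0 : P × F) r, odeDefect f (a, u a) = 0 := by
    intro a ha
    have h1 := e.right_inv (hball a ha).1
    rw [hefw] at h1
    have h2 : e.symm (a, 0) = (a, u a) := Prod.ext (Prod.ext_iff.1 h1).1 rfl
    rw [← h2]; exact congrArg Prod.snd h1
  have hsmooth : ContDiffOn ℝ ∞ u (Metric.ball 0 r) :=
    contDiff_snd.comp_contDiffOn (hes.comp (contDiff_id.prodMk contDiff_const).contDiffOn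
      fun a ha => (hball a ha).1)
  refine ⟨r, hr, ρ, u, hsmooth, hu0, fun a ha => ⟨hsol a ha, (hball a ha).2.1⟩, ?_, ?_⟩
  · intro a ha v hv hav
    have hmem : (a, v) ∈ e.source := hρs <| by
      rw [mem_ball_zero_iff]; exact max_lt (hball a ha).2.2 hv
    have h1 := e.left_inv hmem
    rw [hefw, hav] at h1
    simp only [hu]; rw [h1]
  · intro x
    have hdu : HasFDerivAt u (fderiv ℝ u 0) 0 :=
      ((hsmooth.contDiffAt (Metric.ball_mem_nhds 0 hr)).differentiableAt (by simp)).hasFDerivAt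
    have hpair : HasFDerivAt (fun a => (a, u a)) _ 0 := (hasFDerivAt_id (0 : P × F)).prodMk hdu
    have hDG' : HasFDerivAt (odeDefect f) D ((0 : P × F), u 0) := by rw [hu0]; exact hDG
    have hcomp := hDG'.comp (0 : P × F) hpair
    have hzero : HasFDerivAt (odeDefect f ∘ fun a => (a, u a))
        (0 : P × F →L[ℝ] C(unitInterval, F)) 0 :=
      (hasFDerivAt_const (0 : C(unitInterval, F)) (0 : P × F)).congr_of_eventuallyEq
        (Filter.eventually_of_mem (Metric.ball_mem_nhds 0 hr) hsol)
    have h1 := DFunLike.congr_fun (hcomp.unique hzero) ((0 : P), x)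
    have h2 : D ((0, x), fderiv ℝ u 0 (0, x)) = 0 := h1
    rw [hD, fderiv_odeDefect_zero f hf hfD] at h2
    exact sub_eq_zero.1 h2

end IntegralEquation

theorem ContinuousLinearMap.exists_equiv_of_injective {E : Type*} [NormedAddCommGroup E]
    [NormedSpace ℝ E] [FiniteDimensional ℝ E] (L : E →L[ℝ] E) (hL : ∀ v, L v = 0 → v = 0) :
    ∃ e : E ≃L[ℝ] E, (e : E →L[ℝ] E) = L :=
  ⟨(LinearEquiv.ofInjectiveEndo (L : E →ₗ[ℝ] E)
    ((injective_iff_map_eq_zero _).2 hL)).toContinuousLinearEquiv, rfl⟩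

section NormalForm

/-- The regular equation satisfied by `(y, z)` along the curves `ξ = C τ²`, `w = τ y` of
`ξ' = 2 ξ`, `w' = w + w² β + ξ α`, `z' = ξ γ`. -/
def nodeField (α β γ : ℝ × ℝ × ℝ → ℝ) (w : ℝ × ℝ × (ℝ × ℝ)) : ℝ × ℝ :=
  (w.2.2.1 ^ 2 * β (w.1 * w.2.1 ^ 2, w.2.1 * w.2.2.1, w.2.2.2) +
      w.1 * α (w.1 * w.2.1 ^ 2, w.2.1 * w.2.2.1, w.2.2.2),
    w.1 * w.2.1 * γ (w.1 * w.2.1 ^ 2, w.2.1 * w.2.2.1, w.2.2.2))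

variable {α β γ : ℝ × ℝ × ℝ → ℝ}

theorem contDiff_nodeField (hα : ContDiff ℝ ∞ α) (hβ : ContDiff ℝ ∞ β) (hγ : ContDiff ℝ ∞ γ) :
    ContDiff ℝ ∞ (nodeField α β γ) := by
  unfold nodeField
  fun_prop

theorem fderiv_nodeField_zero (hα : ContDiff ℝ ∞ α) (hβ : ContDiff ℝ ∞ β) (hγ : ContDiff ℝ ∞ γ)
    (τ : ℝ) (x : ℝ × ℝ) : fderiv ℝ (nodeField α β γ) (0, τ, 0) (0, 0, x) = 0 := by
  have hN : HasFDerivAt (nodeField α β γ) (fderiv ℝ (nodeField α β γ) (0, τ, 0))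
      ((0, τ, (0 : ℝ) • x) : ℝ × ℝ × (ℝ × ℝ)) := by
    rw [zero_smul]
    exact ((contDiff_nodeField hα hβ hγ).differentiable (by simp) _).hasFDerivAt
  have hlin : HasDerivAt (fun t : ℝ => ((0, τ, t • x) : ℝ × ℝ × (ℝ × ℝ))) (0, 0, x) 0 := by
    refine (hasDerivAt_const _ _).prodMk ((hasDerivAt_const _ _).prodMk ?_)
    simpa using (hasDerivAt_id (0 : ℝ)).smul_const x
  have hcomp := hN.comp_hasDerivAt (0 : ℝ) hlin
  have hg : DifferentiableAt ℝ (fun t : ℝ => x.1 ^ 2 * β (0, τ * (t * x.1), t * x.2)) 0 := by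
    have := hβ.differentiable (by simp)
    fun_prop
  have hsq : HasDerivAt (fun t : ℝ => t ^ 2 * (x.1 ^ 2 * β (0, τ * (t * x.1), t * x.2))) 0 0 := by
    refine ((hasDerivAt_pow 2 (0 : ℝ)).mul hg.hasDerivAt).congr_deriv ?_
    simp
  have heq : (nodeField α β γ ∘ fun t : ℝ => ((0, τ, t • x) : ℝ × ℝ × (ℝ × ℝ))) =
      fun t : ℝ => (t ^ 2 * (x.1 ^ 2 * β (0, τ * (t * x.1), t * x.2)), 0) := by
    funext t
    simp only [Function.comp, nodeField, Prod.smul_fst, Prod.smul_snd, smul_eq_mul, zero_mul,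
      add_zero]
    rw [mul_pow, mul_assoc]
  rw [heq] at hcomp
  exact hcomp.unique (hsq.prodMk (hasDerivAt_const _ _))

theorem nodeField_scale (σ C s : ℝ) (x : ℝ × ℝ) :
    nodeField α β γ (σ ^ 2 * C, s, (σ * x.1, x.2)) =
      (σ * (σ * (nodeField α β γ (C, σ * s, x)).1), σ * (nodeField α β γ (C, σ * s, x)).2) := by
  have h1 : σ ^ 2 * C * s ^ 2 = C * (σ * s) ^ 2 := by ring
  have h2 : s * (σ * x.1) = σ * s * x.1 := by ring
  simp only [nodeField, h1, h2]
  ext <;> simp <;> ring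

/-- The curve obtained from `v = (y, z)` by rescaling time and the first component by `σ`. -/
def scaleCurve (σ : unitInterval) (v : C(unitInterval, ℝ × ℝ)) : C(unitInterval, ℝ × ℝ) :=
  ⟨fun τ => ((σ : ℝ) * (v (σ * τ)).1, (v (σ * τ)).2), by fun_prop⟩

theorem norm_scaleCurve_le (σ : unitInterval) (v : C(unitInterval, ℝ × ℝ)) :
    ‖scaleCurve σ v‖ ≤ ‖v‖ := by
  refine (ContinuousMap.norm_le _ (norm_nonneg _)).2 fun τ => ?_
  have h := v.norm_coe_le_norm (σ * τ)
  refine max_le ?_ ((norm_snd_le (v (σ * τ))).trans h)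
  refine le_trans ?_ ((norm_fst_le (v (σ * τ))).trans h)
  change ‖(σ : ℝ) * (v (σ * τ)).1‖ ≤ _
  rw [norm_mul, Real.norm_of_nonneg σ.2.1]
  exact mul_le_of_le_one_left (norm_nonneg _) σ.2.2

theorem odeDefect_scaleCurve (f : C(ℝ × ℝ × (ℝ × ℝ), ℝ × ℝ)) (hf : ⇑f = nodeField α β γ)
    (a : ℝ × ℝ × ℝ) (v : C(unitInterval, ℝ × ℝ)) (h : odeDefect f (a, v) = 0)
    (σ : unitInterval) :
    odeDefect f (((σ : ℝ) ^ 2 * a.1, (σ : ℝ) * a.2.1, a.2.2), scaleCurve σ v) = 0 := by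
  rw [odeDefect_eq_zero_iff] at h ⊢
  intro τ
  let S : ℝ × ℝ →L[ℝ] ℝ × ℝ :=
    ((σ : ℝ) • ContinuousLinearMap.fst ℝ ℝ ℝ).prod (ContinuousLinearMap.snd ℝ ℝ ℝ)
  have hS : ∀ x : ℝ × ℝ, S x = ((σ : ℝ) * x.1, x.2) := fun x => rfl
  have hcont : Continuous fun s : ℝ => f (a.1, (projUnit (σ * s) : ℝ), v (projUnit (σ * s))) := by
    fun_prop
  have h1 := congrArg S (h (σ * τ))
  have h2 : scaleCurve σ v τ = S (v (σ * τ)) := rfl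
  have hmul := intervalIntegral.smul_integral_comp_mul_left (a := 0) (b := (τ : ℝ))
    (fun s : ℝ => f (a.1, (projUnit s : ℝ), v (projUnit s))) (σ : ℝ)
  rw [mul_zero] at hmul
  rw [h2, h1, map_add, Set.Icc.coe_mul, ← hmul, map_smul,
    ← S.intervalIntegral_comp_comm (hcont.intervalIntegrable _ _),
    ← intervalIntegral.integral_smul]
  refine congrArg₂ (· + ·) rfl (intervalIntegral.integral_congr fun s hs => ?_)
  rw [Set.uIcc_of_le τ.2.1] at hs
  have hs1 : s ∈ Set.Icc (0 : ℝ) 1 := ⟨hs.1, hs.2.trans τ.2.2⟩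
  have hs2 : (σ : ℝ) * s ∈ Set.Icc (0 : ℝ) 1 :=
    ⟨mul_nonneg σ.2.1 hs1.1, mul_le_one₀ σ.2.2 hs1.1 hs1.2⟩
  have hs3 : σ * projUnit s = projUnit (σ * s) := by
    ext; rw [Set.Icc.coe_mul, coe_projUnit_of_mem hs1, coe_projUnit_of_mem hs2]
  change _ = f ((σ : ℝ) ^ 2 * a.1, (projUnit s : ℝ),
    ((σ : ℝ) * (v (σ * projUnit s)).1, (v (σ * projUnit s)).2))
  rw [hs3, hf, nodeField_scale, coe_projUnit_of_mem hs1]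
  simp only [hS, coe_projUnit_of_mem hs2, Prod.smul_mk, smul_eq_mul]

/-- A resonant `2 : 1` node depending on a parameter, in which the resonant term is absent, is
smoothly linearizable. -/
theorem exists_linearization_node (hα : ContDiff ℝ ∞ α) (hβ : ContDiff ℝ ∞ β)
    (hγ : ContDiff ℝ ∞ γ) :
    ∃ e : OpenPartialHomeomorph (ℝ × ℝ × ℝ) (ℝ × ℝ × ℝ), 0 ∈ e.source ∧ e 0 = 0 ∧
      ContDiffOn ℝ ∞ e e.source ∧ ContDiffOn ℝ ∞ e.symm e.target ∧
      ∀ y ∈ e.source, fderiv ℝ e y (2 * y.1, y.2.1, 0) =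
        (2 * (e y).1, (e y).2.1 + (e y).2.1 ^ 2 * β (e y) + (e y).1 * α (e y),
          (e y).1 * γ (e y)) := by
  let f : C(ℝ × ℝ × (ℝ × ℝ), ℝ × ℝ) :=
    ⟨nodeField α β γ, (contDiff_nodeField hα hβ hγ).continuous⟩
  obtain ⟨r, hr, ρ, u, hu, hu0, hsol, huniq, hDu⟩ := exists_contDiffOn_solution f
    (contDiff_nodeField hα hβ hγ) (fun τ => by simp [f, nodeField])
    (fun τ x => fderiv_nodeField_zero hα hβ hγ τ x)
  let ev : C(unitInterval, ℝ × ℝ) →L[ℝ] ℝ × ℝ := ContinuousMap.evalCLM ℝ 1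
  have hev : ∀ v, ev v = v 1 := fun v => rfl
  let Ψ : ℝ × ℝ × ℝ → ℝ × ℝ × ℝ := fun a => (a.1, ev (u a))
  have hΨ : ContDiffOn ℝ ∞ Ψ (Metric.ball 0 r) :=
    contDiff_fst.contDiffOn.prodMk (ev.contDiff.comp_contDiffOn hu)
  have h0 : (0 : ℝ × ℝ × ℝ) ∈ Metric.ball (0 : ℝ × ℝ × ℝ) r := Metric.mem_ball_self hr
  have hΨ0 : HasFDerivAt Ψ ((ContinuousLinearMap.fst ℝ ℝ (ℝ × ℝ)).prod (ev.comp (fderiv ℝ u 0)))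
      0 :=
    hasFDerivAt_fst.prodMk (ev.hasFDerivAt.comp _
      ((hu.contDiffAt (Metric.ball_mem_nhds 0 hr)).differentiableAt (by simp)).hasFDerivAt)
  obtain ⟨L, hL⟩ := ContinuousLinearMap.exists_equiv_of_injective
    ((ContinuousLinearMap.fst ℝ ℝ (ℝ × ℝ)).prod (ev.comp (fderiv ℝ u 0))) (by
      rintro ⟨C, x⟩ hv
      obtain ⟨h1, h2⟩ := Prod.ext_iff.1 hv
      obtain rfl : C = 0 := h1
      have h3 : ev (fderiv ℝ u 0 (0, x)) = 0 := h2
      rw [hDu, hev, constUnit_apply] at h3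
      rw [h3]; rfl)
  rw [← hL] at hΨ0
  obtain ⟨e, hef, he0, hes, hsymm⟩ :=
    exists_openPartialHomeomorph_contDiffOn_symm Metric.isOpen_ball hΨ h0 L hΨ0
  refine ⟨e, he0, ?_, ?_, hsymm, ?_⟩
  · rw [hef]; simp [Ψ, hu0, hev]
  · rw [hef]; exact hΨ.mono hes
  intro a ha
  rw [hef]
  have har : a ∈ Metric.ball (0 : ℝ × ℝ × ℝ) r := hes ha
  have hscale : ∀ σ ∈ Set.Icc (0 : ℝ) 1,
      Ψ (σ ^ 2 * a.1, σ * a.2.1, a.2.2) =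
        (σ ^ 2 * a.1, σ * (u a (projUnit σ)).1, (u a (projUnit σ)).2) := by
    intro σ hσ
    have hmem : (σ ^ 2 * a.1, σ * a.2.1, a.2.2) ∈ Metric.ball (0 : ℝ × ℝ × ℝ) r := by
      rw [mem_ball_zero_iff] at har ⊢
      refine lt_of_le_of_lt (max_le ?_ (max_le ?_ ?_)) har
      · refine le_trans ?_ (norm_fst_le a)
        rw [norm_mul, Real.norm_of_nonneg (sq_nonneg σ)]
        exact mul_le_of_le_one_left (norm_nonneg _) (pow_le_one₀ hσ.1 hσ.2)
      · refine le_trans ?_ ((norm_fst_le a.2).trans (norm_snd_le a))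
        rw [norm_mul, Real.norm_of_nonneg hσ.1]
        exact mul_le_of_le_one_left (norm_nonneg _) hσ.2
      · exact (norm_snd_le a.2).trans (norm_snd_le a)
    have h1 := huniq _ hmem (scaleCurve ⟨σ, hσ⟩ (u a))
      ((norm_scaleCurve_le _ _).trans_lt (hsol a har).2)
      (odeDefect_scaleCurve f rfl a (u a) (hsol a har).1 ⟨σ, hσ⟩)
    have h2 : projUnit σ = (⟨σ, hσ⟩ : unitInterval) := Subtype.ext (coe_projUnit_of_mem hσ)
    change (_, ev (u _)) = _
    rw [← h1, hev, h2]
    simp [scaleCurve]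
  have hone : (1 : ℝ) ∈ Set.Icc (0 : ℝ) 1 := ⟨zero_le_one, le_rfl⟩
  have hp1 : projUnit 1 = 1 := Subtype.ext (coe_projUnit_of_mem hone)
  let I : ℝ → ℝ × ℝ := fun σ =>
    a.2 + ∫ s in (0 : ℝ)..σ, f (a.1, (projUnit s : ℝ), u a (projUnit s))
  have hI : ∀ σ ∈ Set.Icc (0 : ℝ) 1, u a (projUnit σ) = I σ := by
    intro σ hσ
    have := (odeDefect_eq_zero_iff f a (u a)).1 (hsol a har).1 (projUnit σ)
    rwa [coe_projUnit_of_mem hσ] at this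
  have hI1 : I 1 = u a 1 := by rw [← hI 1 hone, hp1]
  have hId : HasDerivAt I (nodeField α β γ (a.1, 1, u a 1)) 1 := by
    have hc : Continuous fun s : ℝ => f (a.1, (projUnit s : ℝ), u a (projUnit s)) := by fun_prop
    have := (intervalIntegral.integral_hasDerivAt_right (hc.intervalIntegrable 0 1)
      (hc.stronglyMeasurableAtFilter _ _) hc.continuousAt).const_add a.2
    rw [hp1] at this
    exact this
  have hsq : HasDerivAt (fun σ : ℝ => σ ^ 2 * a.1) (2 * a.1) 1 := by
    simpa using ((hasDerivAt_id (1 : ℝ)).pow 2).mul_const a.1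
  have hpath : HasDerivAt (fun σ : ℝ => (σ ^ 2 * a.1, σ * a.2.1, a.2.2))
      (2 * a.1, a.2.1, 0) 1 := by
    refine hsq.prodMk (HasDerivAt.prodMk ?_ (hasDerivAt_const _ _))
    simpa using (hasDerivAt_id (1 : ℝ)).mul_const a.2.1
  have hΨa : HasFDerivAt Ψ (fderiv ℝ Ψ a)
      ((1 : ℝ) ^ 2 * a.1, (1 : ℝ) * a.2.1, a.2.2) := by
    simp only [one_pow, one_mul]
    exact ((hΨ.contDiffAt (Metric.isOpen_ball.mem_nhds har)).differentiableAt
      (by simp)).hasFDerivAt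
  have hleft := (hΨa.comp_hasDerivAt (1 : ℝ) hpath).hasDerivWithinAt (s := Set.Icc 0 1)
  have hright : HasDerivAt (fun σ : ℝ => (σ ^ 2 * a.1, σ * (I σ).1, (I σ).2)) _ 1 :=
    hsq.prodMk (((hasDerivAt_id (1 : ℝ)).mul hId.fst).prodMk hId.snd)
  have hright' := hright.hasDerivWithinAt (s := Set.Icc 0 1)
  have heq : Set.EqOn (Ψ ∘ fun σ : ℝ => (σ ^ 2 * a.1, σ * a.2.1, a.2.2))
      (fun σ : ℝ => (σ ^ 2 * a.1, σ * (I σ).1, (I σ).2)) (Set.Icc 0 1) := fun σ hσ => by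
    simp only [Function.comp, hscale σ hσ, hI σ hσ]
  have hfinal := (uniqueDiffOn_Icc zero_lt_one 1 hone).eq_deriv _
    (hleft.congr (fun σ hσ => (heq hσ).symm) (heq hone).symm) hright'
  rw [hfinal, hI1]
  have e1 : Ψ a = (a.1, u a 1) := rfl
  simp [e1, nodeField, add_assoc]

end NormalForm

/-- A function smooth near a point has the germ of a globally smooth function. -/
theorem ContDiffOn.exists_contDiff_eventuallyEq {E : Type*} [NormedAddCommGroup E]
    [NormedSpace ℝ E] [FiniteDimensional ℝ E] {g : E → ℝ} {s : Set E} (hg : ContDiffOn ℝ ∞ g s)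
    (hs : IsOpen s) {x₀ : E} (hx₀ : x₀ ∈ s) :
    ∃ G : E → ℝ, ContDiff ℝ ∞ G ∧ G =ᶠ[𝓝 x₀] g := by
  obtain ⟨r, hr, hrs⟩ := Metric.nhds_basis_closedBall.mem_iff.1 (hs.mem_nhds hx₀)
  let φ : ContDiffBump x₀ := ⟨r / 2, r, by positivity, by linarith⟩
  refine ⟨fun x => φ x * g x, contDiff_iff_contDiffAt.2 fun x => ?_, ?_⟩
  · by_cases hx : x ∈ s
    · exact φ.contDiff.contDiffAt.mul (hg.contDiffAt (hs.mem_nhds hx))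
    · have hx' : x ∉ tsupport φ := fun h => hx (hrs (by rwa [φ.tsupport_eq] at h))
      refine contDiffAt_const (c := (0 : ℝ)) |>.congr_of_eventuallyEq ?_
      filter_upwards [notMem_tsupport_iff_eventuallyEq.1 hx'] with y hy
      rw [hy]; simp
  · filter_upwards [φ.eventuallyEq_one] with y hy
    rw [hy]; simp

/-- A vector field which in suitable coordinates is proportional to a `2 : 1` node without resonant
term is orbitally equivalent to its linear part. -/
theorem orbEquiv_node_of_coordinates {Dom Ω : Set (ℝ × ℝ × ℝ)} (hΩ : IsOpen Ω) (hDom : Ω ⊆ Dom)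
    {V χ : ℝ × ℝ × ℝ → ℝ × ℝ × ℝ} {α β γ h : ℝ × ℝ × ℝ → ℝ} {x₀ : ℝ × ℝ × ℝ} (hx₀ : x₀ ∈ Ω)
    (hχ : ContDiffOn ℝ ∞ χ Ω) (hχ0 : χ x₀ = 0) (hχ' : ∀ v, fderiv ℝ χ x₀ v = 0 → v = 0)
    (hα : ContDiffOn ℝ ∞ α Ω) (hβ : ContDiffOn ℝ ∞ β Ω) (hγ : ContDiffOn ℝ ∞ γ Ω)
    (hh : ContDiffOn ℝ ∞ h Ω) (hh0 : ∀ x ∈ Ω, h x ≠ 0)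
    (hV : ∀ x ∈ Ω, fderiv ℝ χ x (V x) = h x • (2 * (χ x).1,
      (χ x).2.1 + (χ x).2.1 ^ 2 * β x + (χ x).1 * α x, (χ x).1 * γ x)) :
    OrbEquiv Dom V (fun y => (2 * y.1, y.2.1, 0)) x₀ 0 := by
  obtain ⟨L, hL⟩ := ContinuousLinearMap.exists_equiv_of_injective _ hχ'
  have hχd : ∀ x ∈ Ω, HasFDerivAt χ (fderiv ℝ χ x) x := fun x hx =>
    ((hχ.contDiffAt (hΩ.mem_nhds hx)).differentiableAt (by simp)).hasFDerivAt
  obtain ⟨k, hk, hk0, hkΩ, hks⟩ := exists_openPartialHomeomorph_contDiffOn_symm hΩ hχ hx₀ L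
    (by rw [hL]; exact hχd x₀ hx₀)
  have hk00 : k x₀ = 0 := by rw [hk, hχ0]
  have h0t : (0 : ℝ × ℝ × ℝ) ∈ k.target := hk00 ▸ k.map_source hk0
  have hmaps : Set.MapsTo k.symm k.target Ω := fun y hy => hkΩ (k.map_target hy)
  obtain ⟨A, hA, hAe⟩ := (hα.comp hks hmaps).exists_contDiff_eventuallyEq k.open_target h0t
  obtain ⟨B, hB, hBe⟩ := (hβ.comp hks hmaps).exists_contDiff_eventuallyEq k.open_target h0t
  obtain ⟨C, hC, hCe⟩ := (hγ.comp hks hmaps).exists_contDiff_eventuallyEq k.open_target h0t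
  obtain ⟨T, hT, hTo, hT0⟩ := eventually_nhds_iff.1 (hAe.and (hBe.and hCe))
  obtain ⟨e, he0, he00, hes, hesymm, hefd⟩ := exists_linearization_node hA hB hC
  have h0e : (0 : ℝ × ℝ × ℝ) ∈ e.target := by
    have := e.map_source he0; rwa [he00] at this
  have hes0 : e.symm 0 = 0 := by
    have := e.left_inv he0; rwa [he00] at this
  have hopen : IsOpen (k.source ∩ k ⁻¹' T) := k.isOpen_inter_preimage hTo
  let c := (k.trans e.symm).restrOpen _ hopen
  have hcU : ∀ x ∈ c.source, x ∈ k.source ∧ k x ∈ e.target ∧ k x ∈ T := by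
    rintro x ⟨hx, hx'⟩
    rw [OpenPartialHomeomorph.trans_source] at hx
    exact ⟨hx.1, hx.2, hx'.2⟩
  have hc : ∀ x, c x = e.symm (k x) := fun x => rfl
  have hcs : ∀ x, c.symm x = k.symm (e x) := fun x => rfl
  have hct : ∀ y ∈ c.target, y ∈ e.source ∧ e y ∈ k.target := by
    intro y hy
    obtain ⟨h1, h2, -⟩ := hcU _ (c.map_target hy)
    have h3 := c.right_inv hy
    rw [hc] at h3
    have h4 := e.map_target h2
    have h5 := e.right_inv h2
    rw [h3] at h4 h5
    exact ⟨h4, h5 ▸ k.map_source h1⟩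
  have hxc : x₀ ∈ c.source := by
    refine ⟨?_, hk0, by rw [Set.mem_preimage, hk00]; exact hT0⟩
    rw [OpenPartialHomeomorph.trans_source]
    exact ⟨hk0, by rw [Set.mem_preimage, hk00]; exact h0e⟩
  have hcx : c x₀ = 0 := by rw [hc, hk00, hes0]
  refine ⟨c.source, c.target, c, c.symm, h, c.open_source, c.open_target, hxc,
    hcx ▸ c.map_source hxc, fun x hx => hDom (hkΩ (hcU x hx).1), ?_, ?_, hcx,
    fun x hx => c.map_source hx, fun y hy => c.map_target hy, fun x hx => c.left_inv hx,
    fun y hy => c.right_inv hy, hh.mono fun x hx => hkΩ (hcU x hx).1,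
    fun x hx => hh0 x (hkΩ (hcU x hx).1), ?_⟩
  · refine hesymm.comp (t := e.target) (f := k) ?_ fun x hx => (hcU x hx).2.1
    rw [hk]; exact hχ.mono fun x hx => hkΩ (hcU x hx).1
  · exact hks.comp (hes.mono fun y hy => (hct y hy).1) fun y hy => (hct y hy).2
  · intro x hx
    obtain ⟨hx1, hx2, hx3⟩ := hcU x hx
    obtain ⟨y, hy, hyx⟩ : ∃ y ∈ e.source, e y = k x := ⟨_, e.map_target hx2, e.right_inv hx2⟩
    have hcy : c x = y := by rw [hc, ← hyx, e.left_inv hy]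
    have hkd : HasFDerivAt k (fderiv ℝ χ x) x := by rw [hk]; exact hχd x (hkΩ hx1)
    have hed : HasFDerivAt e (fderiv ℝ e y) y :=
      ((hes.contDiffAt (e.open_source.mem_nhds hy)).differentiableAt (by simp)).hasFDerivAt
    have hesd : HasFDerivAt e.symm (fderiv ℝ e.symm (k x)) (k x) :=
      ((hesymm.contDiffAt (e.open_target.mem_nhds hx2)).differentiableAt (by simp)).hasFDerivAt
    have hcd : HasFDerivAt c ((fderiv ℝ e.symm (k x)).comp (fderiv ℝ χ x)) x := hesd.comp x hkd
    have hinv : (fderiv ℝ e.symm (k x)).comp (fderiv ℝ e y) = ContinuousLinearMap.id ℝ _ := by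
      have h1 : HasFDerivAt (e.symm ∘ e) ((fderiv ℝ e.symm (k x)).comp (fderiv ℝ e y)) y :=
        HasFDerivAt.comp y (by rw [hyx]; exact hesd) hed
      refine h1.unique ((hasFDerivAt_id y).congr_of_eventuallyEq ?_)
      filter_upwards [e.open_source.mem_nhds hy] with t ht using e.left_inv ht
    obtain ⟨hTA, hTB, hTC⟩ := hT (k x) hx3
    simp only [Function.comp, k.left_inv hx1] at hTA hTB hTC
    have hfy := hefd y hy
    rw [hyx, hTA, hTB, hTC, hk] at hfy
    rw [hcd.fderiv, ContinuousLinearMap.comp_apply, hV x (hkΩ hx1), ← hfy, map_smul, hcy]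
    congr 1
    exact DFunLike.congr_fun hinv _

theorem fderiv_apply_eq_d1_d2 (g : ℝ × ℝ → ℝ) (q v : ℝ × ℝ) :
    fderiv ℝ g q v = d1 g q * v.1 + d2 g q * v.2 := by
  have hv : v = v.1 • ((1 : ℝ), (0 : ℝ)) + v.2 • ((0 : ℝ), (1 : ℝ)) := by ext <;> simp
  conv_lhs => rw [hv, map_add, map_smul, map_smul]
  simp only [d1, d2, smul_eq_mul]
  ring

theorem ContDiffOn.d1 {g : ℝ × ℝ → ℝ} {D : Set (ℝ × ℝ)} (hg : ContDiffOn ℝ ∞ g D)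
    (hD : IsOpen D) : ContDiffOn ℝ ∞ (d1 g) D :=
  (hg.fderiv_of_isOpen hD (by simp)).clm_apply contDiffOn_const

theorem ContDiffOn.d2 {g : ℝ × ℝ → ℝ} {D : Set (ℝ × ℝ)} (hg : ContDiffOn ℝ ∞ g D)
    (hD : IsOpen D) : ContDiffOn ℝ ∞ (d2 g) D :=
  (hg.fderiv_of_isOpen hD (by simp)).clm_apply contDiffOn_const

theorem fderiv_discriminant {a b c : ℝ × ℝ → ℝ} {q : ℝ × ℝ} (ha : DifferentiableAt ℝ a q)
    (hb : DifferentiableAt ℝ b q) (hc : DifferentiableAt ℝ c q) (v : ℝ × ℝ) :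
    fderiv ℝ (fun q => b q ^ 2 - a q * c q) q v =
      2 * b q * fderiv ℝ b q v - fderiv ℝ a q v * c q - a q * fderiv ℝ c q v := by
  have h := (hb.hasFDerivAt.pow 2).sub (ha.hasFDerivAt.mul hc.hasFDerivAt)
  have h' : HasFDerivAt (fun q => b q ^ 2 - a q * c q) _ q := h
  rw [h'.fderiv]
  simp
  ring

/-- The projection `(t, x, p) ↦ (t, x)`. -/
def basePoint : ℝ × ℝ × ℝ →L[ℝ] ℝ × ℝ :=
  (ContinuousLinearMap.fst ℝ ℝ (ℝ × ℝ)).prod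
    ((ContinuousLinearMap.fst ℝ ℝ ℝ).comp (ContinuousLinearMap.snd ℝ ℝ (ℝ × ℝ)))

theorem basePoint_apply (z : ℝ × ℝ × ℝ) : basePoint z = (z.1, z.2.1) := rfl

/-- The coordinates `(Δ, a p + b, l₁ (t - t₀) + l₂ (x - x₀))`. -/
def adaptedCoordinates (Δ a b : ℝ × ℝ → ℝ) (l q : ℝ × ℝ) (z : ℝ × ℝ × ℝ) : ℝ × ℝ × ℝ :=
  (Δ (basePoint z), a (basePoint z) * z.2.2 + b (basePoint z),
    l.1 * (z.1 - q.1) + l.2 * (z.2.1 - q.2))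

theorem fderiv_adaptedCoordinates {Δ a b : ℝ × ℝ → ℝ} (l q : ℝ × ℝ) {z : ℝ × ℝ × ℝ}
    (hΔ : DifferentiableAt ℝ Δ (basePoint z)) (ha : DifferentiableAt ℝ a (basePoint z))
    (hb : DifferentiableAt ℝ b (basePoint z)) (v : ℝ × ℝ × ℝ) :
    fderiv ℝ (adaptedCoordinates Δ a b l q) z v =
      (d1 Δ (basePoint z) * v.1 + d2 Δ (basePoint z) * v.2.1,
        (d1 a (basePoint z) * v.1 + d2 a (basePoint z) * v.2.1) * z.2.2 +
          a (basePoint z) * v.2.2 + (d1 b (basePoint z) * v.1 + d2 b (basePoint z) * v.2.1),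
        l.1 * v.1 + l.2 * v.2.1) := by
  have hcomp : ∀ {g : ℝ × ℝ → ℝ}, DifferentiableAt ℝ g (basePoint z) →
      HasFDerivAt (fun z => g (basePoint z)) ((fderiv ℝ g (basePoint z)).comp basePoint) z :=
    fun hg => hg.hasFDerivAt.comp z basePoint.hasFDerivAt
  have h1 : HasFDerivAt (fun z : ℝ × ℝ × ℝ => z.1) (ContinuousLinearMap.fst ℝ ℝ (ℝ × ℝ)) z :=
    hasFDerivAt_fst
  have h2 : HasFDerivAt (fun z : ℝ × ℝ × ℝ => z.2) (ContinuousLinearMap.snd ℝ ℝ (ℝ × ℝ)) z :=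
    hasFDerivAt_snd
  have h := (hcomp hΔ).prodMk ((((hcomp ha).mul h2.snd).add (hcomp hb)).prodMk
    (((h1.sub_const q.1).const_mul l.1).add ((h2.fst.sub_const q.2).const_mul l.2)))
  have h' : HasFDerivAt (adaptedCoordinates Δ a b l q) _ z := h
  rw [h'.fderiv]
  simp [basePoint_apply, fderiv_apply_eq_d1_d2]
  ring

/-- The component of the geodesic field along `w = a p + b`, expanded in `w` and `Δ`: the linear
part in `w` has half the rate `k` of `Δ`. -/
theorem geodesic_field_expansion (a b c p at' ax bt bx ct cx : ℝ) (ha : a ≠ 0)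
    (hk : (2 * b * bt - at' * c - a * ct) + p * (2 * b * bx - ax * c - a * cx) ≠ 0) :
    (at' * (b ^ 2 - a * c) + ax * (p * (b ^ 2 - a * c))) * p +
      a * (((a * (at' - 2 * bx) + b * ax) * p ^ 3 +
        (b * (3 * at' - 2 * bx) + c * ax - 2 * a * cx) * p ^ 2 +
        (b * (2 * bt - 3 * cx) + 2 * c * at' - a * ct) * p +
        (c * (2 * bt - cx) - b * ct)) / 2) +
      (bt * (b ^ 2 - a * c) + bx * (p * (b ^ 2 - a * c))) =
    ((2 * b * bt - at' * c - a * ct) + p * (2 * b * bx - ax * c - a * cx)) / 2 *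
      ((a * p + b) + (a * p + b) ^ 2 *
        (((a * (at' - 2 * bx) + b * ax) * (a * p + b) + a * (2 * b * bx - ax * c - a * cx)) /
          (a ^ 2 * ((2 * b * bt - at' * c - a * ct) + p * (2 * b * bx - ax * c - a * cx)))) +
      (b ^ 2 - a * c) *
        ((-3 * ax * (a * p) ^ 2 - 3 * (b * ax + a * at') * (a * p) - 2 * a ^ 2 * bt +
            2 * a * b * bx - a * (2 * b * bx - ax * c - a * cx) +
            ((b ^ 2 - a * c) - 2 * b ^ 2) * ax - a * b * at' +
            2 * a ^ 2 * (at' * p + ax * p ^ 2 + bt + bx * p)) /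
          (a ^ 2 * ((2 * b * bt - at' * c - a * ct) + p * (2 * b * bx - ax * c - a * cx))))) := by
  generalize hK : (2 * b * bt - at' * c - a * ct) + p * (2 * b * bx - ax * c - a * cx) = K at hk ⊢
  field_simp
  rw [← hK]
  ring

theorem ContDiffOn.expansion_coefficient_sq {s : Set (ℝ × ℝ × ℝ)}
    {a b at' ax bx Δx p : ℝ × ℝ × ℝ → ℝ} (ha : ContDiffOn ℝ ∞ a s) (hb : ContDiffOn ℝ ∞ b s)
    (hat : ContDiffOn ℝ ∞ at' s) (hax : ContDiffOn ℝ ∞ ax s) (hbx : ContDiffOn ℝ ∞ bx s)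
    (hΔx : ContDiffOn ℝ ∞ Δx s) (hp : ContDiffOn ℝ ∞ p s) :
    ContDiffOn ℝ ∞ (fun z => (a z * (at' z - 2 * bx z) + b z * ax z) * (a z * p z + b z) +
      a z * Δx z) s := by
  fun_prop

theorem ContDiffOn.expansion_coefficient_discriminant {s : Set (ℝ × ℝ × ℝ)}
    {a b at' ax bt bx Δ Δx p : ℝ × ℝ × ℝ → ℝ} (ha : ContDiffOn ℝ ∞ a s)
    (hb : ContDiffOn ℝ ∞ b s) (hat : ContDiffOn ℝ ∞ at' s) (hax : ContDiffOn ℝ ∞ ax s)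
    (hbt : ContDiffOn ℝ ∞ bt s) (hbx : ContDiffOn ℝ ∞ bx s) (hΔ : ContDiffOn ℝ ∞ Δ s)
    (hΔx : ContDiffOn ℝ ∞ Δx s) (hp : ContDiffOn ℝ ∞ p s) :
    ContDiffOn ℝ ∞ (fun z => -3 * ax z * (a z * p z) ^ 2 -
      3 * (b z * ax z + a z * at' z) * (a z * p z) - 2 * a z ^ 2 * bt z +
      2 * a z * b z * bx z - a z * Δx z + (Δ z - 2 * b z ^ 2) * ax z - a z * b z * at' z +
      2 * a z ^ 2 * (at' z * p z + ax z * p z ^ 2 + bt z + bx z * p z)) s := by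
  fun_prop

/-- Pseudo-Riemannian metric: at a parabolic point `q*` with isotropic direction
`p₀ = −b/a`, the germ of `V = (Δ, pΔ, M/2)` at `(q*, p₀)` is `C^∞`-smoothly orbitally
equivalent to `ξ̇ = 2ξ, η̇ = η, ζ̇ = 0`. -/
theorem stmt16 (D : Set (ℝ × ℝ)) (hD : IsOpen D)
    (a b c : ℝ × ℝ → ℝ)
    (ha : ContDiffOn ℝ (⊤ : ℕ∞) a D) (hb : ContDiffOn ℝ (⊤ : ℕ∞) b D)
    (hc : ContDiffOn ℝ (⊤ : ℕ∞) c D)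
    (Δ : ℝ × ℝ → ℝ) (hΔ : Δ = fun q => b q ^ 2 - a q * c q)
    (μ₃ μ₂ μ₁ μ₀ : ℝ × ℝ → ℝ)
    (hμ₃ : μ₃ = fun q => a q * (d1 a q - 2 * d2 b q) + b q * d2 a q)
    (hμ₂ : μ₂ = fun q => b q * (3 * d1 a q - 2 * d2 b q) + c q * d2 a q - 2 * a q * d2 c q)
    (hμ₁ : μ₁ = fun q => b q * (2 * d1 b q - 3 * d2 c q) + 2 * c q * d1 a q - a q * d1 c q)
    (hμ₀ : μ₀ = fun q => c q * (2 * d1 b q - d2 c q) - b q * d1 c q)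
    (M : ℝ × ℝ × ℝ → ℝ)
    (hM : M = fun z => μ₃ (z.1, z.2.1) * z.2.2 ^ 3 + μ₂ (z.1, z.2.1) * z.2.2 ^ 2 +
      μ₁ (z.1, z.2.1) * z.2.2 + μ₀ (z.1, z.2.1))
    (V : ℝ × ℝ × ℝ → ℝ × ℝ × ℝ)
    (hV : V = fun z => (Δ (z.1, z.2.1), z.2.2 * Δ (z.1, z.2.1), M z / 2))
    (q : ℝ × ℝ) (hq : q ∈ D)
    (hq1 : Δ q = 0) (hq2 : fderiv ℝ Δ q ≠ 0) (hq3 : a q ≠ 0)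
    (hq4 : a q * d1 Δ q - b q * d2 Δ q ≠ 0)
    (p₀ : ℝ) (hp₀ : p₀ = -(b q) / a q) :
    V (q.1, q.2, p₀) = 0 ∧
    OrbEquiv {z : ℝ × ℝ × ℝ | (z.1, z.2.1) ∈ D} V
      (fun y : ℝ × ℝ × ℝ => (2 * y.1, y.2.1, (0 : ℝ))) (q.1, q.2, p₀) 0 := by
  subst hμ₃ hμ₂ hμ₁ hμ₀ hM
  have hΔs : ContDiffOn ℝ ∞ Δ D := hΔ ▸ (hb.pow 2).sub (ha.mul hc)
  have hdiff : ∀ {g : ℝ × ℝ → ℝ}, ContDiffOn ℝ ∞ g D → ∀ r ∈ D, DifferentiableAt ℝ g r :=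
    fun hg r hr => (hg.contDiffAt (hD.mem_nhds hr)).differentiableAt (by simp)
  have hΔ1 : ∀ r ∈ D, d1 Δ r = 2 * b r * d1 b r - d1 a r * c r - a r * d1 c r := fun r hr => by
    rw [hΔ]
    exact fderiv_discriminant (hdiff ha r hr) (hdiff hb r hr) (hdiff hc r hr) _
  have hΔ2 : ∀ r ∈ D, d2 Δ r = 2 * b r * d2 b r - d2 a r * c r - a r * d2 c r := fun r hr => by
    rw [hΔ]
    exact fderiv_discriminant (hdiff ha r hr) (hdiff hb r hr) (hdiff hc r hr) _
  have hw : a q * p₀ + b q = 0 := by rw [hp₀]; field_simp; ring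
  have hk₀ : d1 Δ q + p₀ * d2 Δ q ≠ 0 := by
    intro h
    apply hq4
    linear_combination a q * h - d2 Δ q * hw
  have hdet : d1 Δ q ^ 2 + d2 Δ q ^ 2 ≠ 0 := by
    intro h
    have h1 : d1 Δ q = 0 := by nlinarith [sq_nonneg (d1 Δ q), sq_nonneg (d2 Δ q)]
    have h2 : d2 Δ q = 0 := by nlinarith [sq_nonneg (d1 Δ q), sq_nonneg (d2 Δ q)]
    exact hk₀ (by rw [h1, h2]; ring)
  have hexp : ∀ r ∈ D, ∀ p, a r ≠ 0 → d1 Δ r + p * d2 Δ r ≠ 0 → _ := fun r hr p har hk =>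
    geodesic_field_expansion (a r) (b r) (c r) p (d1 a r) (d2 a r) (d1 b r) (d2 b r) (d1 c r)
      (d2 c r) har (by rwa [← hΔ1 r hr, ← hΔ2 r hr])
  have hΔr : ∀ r, b r ^ 2 - a r * c r = Δ r := fun r => by rw [hΔ]
  constructor
  · have h := hexp q hq p₀ hq3 hk₀
    simp only [hΔr, hq1, hw] at h
    have hM0 : a q * (V (q.1, q.2, p₀)).2.2 = 0 := by
      rw [hV]
      simp only [Prod.mk.eta]
      linear_combination h
    have h3 := (mul_eq_zero.mp hM0).resolve_left hq3
    refine Prod.ext ?_ (Prod.ext ?_ h3) <;> simp [hV, hq1]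
  · set k : ℝ × ℝ × ℝ → ℝ := fun z => d1 Δ (basePoint z) + z.2.2 * d2 Δ (basePoint z) with hk
    set Ω : Set (ℝ × ℝ × ℝ) := {z | basePoint z ∈ D ∧ a (basePoint z) ≠ 0 ∧ k z ≠ 0} with hΩdef
    have hDom : IsOpen (basePoint ⁻¹' D) := hD.preimage basePoint.continuous
    have hlift : ∀ {g : ℝ × ℝ → ℝ}, ContDiffOn ℝ ∞ g D →
        ContDiffOn ℝ ∞ (fun z => g (basePoint z)) (basePoint ⁻¹' D) :=
      fun hg => hg.comp basePoint.contDiff.contDiffOn fun _ hz => hz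
    have hp : ContDiff ℝ ∞ (fun z : ℝ × ℝ × ℝ => z.2.2) := by fun_prop
    have hks : ContDiffOn ℝ ∞ k (basePoint ⁻¹' D) :=
      (hlift (hΔs.d1 hD)).add (hp.contDiffOn.mul (hlift (hΔs.d2 hD)))
    have hΩ : IsOpen Ω := by
      have h : Ω = basePoint ⁻¹' D ∩ (fun z => a (basePoint z) * k z) ⁻¹' {0}ᶜ :=
        Set.ext fun z => by simp [hΩdef]
      rw [h]
      exact ((hlift ha).mul hks).continuousOn.isOpen_inter_preimage hDom isOpen_compl_singleton
    have hΩD : Ω ⊆ basePoint ⁻¹' D := fun z hz => hz.1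
    have ha' := (hlift ha).mono hΩD
    have hb' := (hlift hb).mono hΩD
    have hΔ' := (hlift hΔs).mono hΩD
    have hat := (hlift (ha.d1 hD)).mono hΩD
    have hax := (hlift (ha.d2 hD)).mono hΩD
    have hbt := (hlift (hb.d1 hD)).mono hΩD
    have hbx := (hlift (hb.d2 hD)).mono hΩD
    have hΔx := (hlift (hΔs.d2 hD)).mono hΩD
    have hk' := hks.mono hΩD
    have hp' := hp.contDiffOn (s := Ω)
    have hak : ∀ z ∈ Ω, a (basePoint z) ^ 2 * k z ≠ 0 :=
      fun z hz => mul_ne_zero (pow_ne_zero 2 hz.2.1) hz.2.2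
    refine orbEquiv_node_of_coordinates hΩ (Dom := {z | (z.1, z.2.1) ∈ D}) hΩD
      (χ := adaptedCoordinates Δ a b (-d2 Δ q, d1 Δ q) q)
      (β := fun z => ((a (basePoint z) * (d1 a (basePoint z) - 2 * d2 b (basePoint z)) +
          b (basePoint z) * d2 a (basePoint z)) * (a (basePoint z) * z.2.2 + b (basePoint z)) +
          a (basePoint z) * d2 Δ (basePoint z)) / (a (basePoint z) ^ 2 * k z))
      (α := fun z => (-3 * d2 a (basePoint z) * (a (basePoint z) * z.2.2) ^ 2 -
          3 * (b (basePoint z) * d2 a (basePoint z) + a (basePoint z) * d1 a (basePoint z)) *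
            (a (basePoint z) * z.2.2) - 2 * a (basePoint z) ^ 2 * d1 b (basePoint z) +
          2 * a (basePoint z) * b (basePoint z) * d2 b (basePoint z) -
          a (basePoint z) * d2 Δ (basePoint z) +
          (Δ (basePoint z) - 2 * b (basePoint z) ^ 2) * d2 a (basePoint z) -
          a (basePoint z) * b (basePoint z) * d1 a (basePoint z) +
          2 * a (basePoint z) ^ 2 * (d1 a (basePoint z) * z.2.2 + d2 a (basePoint z) * z.2.2 ^ 2 +
            d1 b (basePoint z) + d2 b (basePoint z) * z.2.2)) / (a (basePoint z) ^ 2 * k z))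
      (γ := fun z => 2 * (-d2 Δ q + z.2.2 * d1 Δ q) / k z) (h := fun z => k z / 2)
      ⟨hq, hq3, hk₀⟩ ?_ ?_ ?_ ?_ ?_ ?_ ?_ ?_ ?_
    · exact hΔ'.prodMk (((ha'.mul hp').add hb').prodMk (by fun_prop))
    · ext <;> simp [adaptedCoordinates, basePoint_apply, hq1, hw]
    · intro v hv
      rw [fderiv_adaptedCoordinates _ _ (hdiff hΔs _ hq) (hdiff ha _ hq) (hdiff hb _ hq)] at hv
      simp only [basePoint_apply, Prod.mk.eta, Prod.mk_eq_zero] at hv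
      obtain ⟨h1, h2, h3⟩ := hv
      have hv1 : v.1 = 0 := (mul_eq_zero.mp (show (d1 Δ q ^ 2 + d2 Δ q ^ 2) * v.1 = 0 by
        linear_combination d1 Δ q * h1 - d2 Δ q * h3)).resolve_left hdet
      have hv2 : v.2.1 = 0 := (mul_eq_zero.mp (show (d1 Δ q ^ 2 + d2 Δ q ^ 2) * v.2.1 = 0 by
        linear_combination d2 Δ q * h1 + d1 Δ q * h3)).resolve_left hdet
      have hv3 : v.2.2 = 0 := by simpa [hv1, hv2, hq3] using h2
      exact Prod.ext hv1 (Prod.ext hv2 hv3)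
    · exact (ContDiffOn.expansion_coefficient_discriminant ha' hb' hat hax hbt hbx hΔ' hΔx hp').div
        ((ha'.pow 2).mul hk') hak
    · exact (ContDiffOn.expansion_coefficient_sq ha' hb' hat hax hbx hΔx hp').div
        ((ha'.pow 2).mul hk') hak
    · exact ContDiffOn.div (by fun_prop) hk' fun z hz => hz.2.2
    · exact hk'.div_const 2
    · exact fun z hz => div_ne_zero hz.2.2 two_ne_zero
    · intro z hz
      have h := hexp _ hz.1 z.2.2 hz.2.1 hz.2.2
      simp only [← hΔ1 _ hz.1, ← hΔ2 _ hz.1, hΔr] at h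
      have hkz : k z ≠ 0 := hz.2.2
      rw [fderiv_adaptedCoordinates _ _ (hdiff hΔs _ hz.1) (hdiff ha _ hz.1) (hdiff hb _ hz.1), hV]
      refine Prod.ext ?_ (Prod.ext h ?_)
      · simp only [adaptedCoordinates, Prod.smul_fst, smul_eq_mul, hk, basePoint_apply]
        ring
      · simp only [adaptedCoordinates, Prod.smul_snd, smul_eq_mul, ← basePoint_apply]
        field_simp
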